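/- For every c ∈ ℝ^K with all entries positive and every index k, the two-sided limit lim_{δ→0} (R(c + δ e_k) − R(c))/δ exists and equals −p_k(c) / (ν(c) · ln 2), where e_k is the k-th standard basis vector of ℝ^K. In particular, if p_k(c) = 0 this derivative is 0. -/

import Mathlib

open Classical in
/-- The unique positive solution ν(c) of the water-filling equation
Σ_k max(ν − σ² c_k, 0) = P_T. -/
noncomputable def waterLevel (K : ℕ) (σ2 PT : ℝ) (c : Fin K → ℝ) : ℝ :=
  if h : ∃ ν : ℝ, 0 < ν ∧ ∑ k : Fin K, max (ν - σ2 * c k) 0 = PT then h.choose else 0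

/-- The water-filling power allocation p_k(c) = max(ν(c)/c_k − σ², 0). -/
noncomputable def wfPower (K : ℕ) (σ2 PT : ℝ) (c : Fin K → ℝ) (k : Fin K) : ℝ :=
  max (waterLevel K σ2 PT c / c k - σ2) 0

/-- The resulting sum rate R(c) = Σ_k log₂(1 + p_k(c)/σ²). -/
noncomputable def sumRate (K : ℕ) (σ2 PT : ℝ) (c : Fin K → ℝ) : ℝ :=
  ∑ k : Fin K, Real.logb 2 (1 + wfPower K σ2 PT c k / σ2)

/-!
The water-filling powers maximise `∑ log (1 + q k / σ²)` over `q ≥ 0` with `∑ c k * q k = P`, and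
`1 / ν(c)` is the multiplier of the constraint. Testing the Lagrangian inequality at `c` with the
optimal allocation at `c'`, and vice versa, bounds `R(c') - R(c)` between the linear functionals of
`c' - c` with coefficients `-p_k(c) / (ν(c') ln 2)` and `-p_k(c') / (ν(c) ln 2)`. The level `ν` is
Lipschitz, so both functionals tend to the one with coefficients `-p_k(c) / (ν(c) ln 2)`, which is
therefore the Fréchet derivative. Only the continuity of `ν` and `p` enters, so it does not matter
that they may fail to be differentiable where `I_0(c)` is nonempty.
-/

open Filter Topology

section Sandwich

variable {E : Type*} [NormedAddCommGroup E] [NormedSpace ℝ E]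

theorem hasFDerivAt_of_eventually_le_of_eventually_ge {f : E → ℝ} {x : E} {L : E →L[ℝ] ℝ}
    {lower upper : E → E →L[ℝ] ℝ} (hlower : Tendsto lower (𝓝 x) (𝓝 L))
    (hupper : Tendsto upper (𝓝 x) (𝓝 L)) (hge : ∀ᶠ y in 𝓝 x, f x + lower y (y - x) ≤ f y)
    (hle : ∀ᶠ y in 𝓝 x, f y ≤ f x + upper y (y - x)) : HasFDerivAt f L x := by
  refine .of_isLittleO <| Asymptotics.isLittleO_iff.2 fun ε hε => ?_
  filter_upwards [hge, hle, Metric.tendsto_nhds.1 hlower ε hε, Metric.tendsto_nhds.1 hupper ε hε]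
    with y hge hle hlower hupper
  have apply_le {A : E →L[ℝ] ℝ} (hA : dist A L < ε) : |A (y - x) - L (y - x)| ≤ ε * ‖y - x‖ :=
    (A - L).le_of_opNorm_le (dist_eq_norm A L ▸ hA.le) (y - x)
  have hl := abs_le.1 (apply_le hlower)
  have hu := abs_le.1 (apply_le hupper)
  exact abs_le.2 ⟨by linarith, by linarith⟩

end Sandwich

section WaterVolume

variable {ι : Type*} [Fintype ι]

/-- The total power poured over the floor profile `n` when the surface is at height `ν`, that is,
the left-hand side of the water-filling equation with `n k` in place of `σ² c_k`. -/
def waterVolume (n : ι → ℝ) (ν : ℝ) : ℝ := ∑ k, max (ν - n k) 0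

variable {n n' : ι → ℝ} {ν ν' e P : ℝ}

theorem exists_lt_of_waterVolume_pos (h : 0 < waterVolume n ν) : ∃ k, n k < ν := by
  obtain ⟨k, -, hk⟩ := Finset.exists_lt_of_sum_lt (s := Finset.univ) (f := fun _ : ι => (0 : ℝ))
    (by simpa only [Finset.sum_const_zero, waterVolume] using h)
  exact ⟨k, by simpa using hk⟩

theorem pos_of_waterVolume_pos (hn : ∀ k, 0 ≤ n k) (h : 0 < waterVolume n ν) : 0 < ν :=
  let ⟨k, hk⟩ := exists_lt_of_waterVolume_pos h
  (hn k).trans_lt hk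

theorem waterVolume_lt_waterVolume (hpos : 0 < waterVolume n ν) (h : ν < ν') :
    waterVolume n ν < waterVolume n ν' := by
  obtain ⟨k, hk⟩ := exists_lt_of_waterVolume_pos hpos
  refine Finset.sum_lt_sum (fun j _ => by gcongr) ⟨k, Finset.mem_univ k, ?_⟩
  exact max_lt_max_left_iff.2 ⟨by linarith, by linarith⟩

theorem waterVolume_le_waterVolume_add (h : ∀ k, n' k ≤ n k + e) :
    waterVolume n ν ≤ waterVolume n' (ν + e) :=
  Finset.sum_le_sum fun k _ => max_le_max_right 0 (by linarith [h k])

theorem le_add_of_waterVolume_eq (hP : 0 < P) (hν : waterVolume n ν = P)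
    (hν' : waterVolume n' ν' = P) (h : ∀ k, n' k ≤ n k + e) : ν' ≤ ν + e := by
  have hle : P ≤ waterVolume n' (ν + e) := hν ▸ waterVolume_le_waterVolume_add h
  by_contra! hlt
  exact (waterVolume_lt_waterVolume (hP.trans_le hle) hlt).not_ge (hν' ▸ hle)

theorem exists_waterVolume_eq [Nonempty ι] (n : ι → ℝ) (hP : 0 ≤ P) :
    ∃ ν, waterVolume n ν = P := by
  have hcont : Continuous (waterVolume n) := by unfold waterVolume; fun_prop
  refine mem_range_of_exists_le_of_exists_ge hcont ⟨-‖n‖, ?_⟩ ?_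
  · have hdry k : max (-‖n‖ - n k) 0 = 0 :=
      max_eq_right (by linarith [neg_le_of_abs_le (norm_le_pi_norm n k)])
    simpa only [waterVolume, hdry, Finset.sum_const_zero] using hP
  · obtain ⟨k⟩ := ‹Nonempty ι›
    refine ⟨n k + P, ?_⟩
    calc P ≤ max (n k + P - n k) 0 := by simp
      _ ≤ waterVolume n (n k + P) :=
        Finset.single_le_sum (f := fun j => max (n k + P - n j) 0)
          (fun _ _ => le_max_right _ _) (Finset.mem_univ k)

end WaterVolume

section Optimality

variable {s ν x p q : ℝ}

theorem log_one_add_div_le_add (hs : 0 < s) (hp : 0 ≤ p) (hq : 0 ≤ q) :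
    Real.log (1 + q / s) ≤ Real.log (1 + p / s) + (q - p) / (s + p) := by
  have hp' : 0 < 1 + p / s := by positivity
  have hq' : 0 < 1 + q / s := by positivity
  have hratio : (1 + q / s) / (1 + p / s) - 1 = (q - p) / (s + p) := by
    have : s + p ≠ 0 := by positivity
    field_simp
    ring
  have hlog := Real.log_le_sub_one_of_pos (div_pos hq' hp')
  rw [Real.log_div hq'.ne' hp'.ne', hratio] at hlog
  linarith

theorem mul_max_div_sub (hx : 0 < x) : x * max (ν / x - s) 0 = max (ν - s * x) 0 := by
  rw [mul_max_of_nonneg _ _ hx.le, mul_zero, mul_sub, mul_div_cancel₀ _ hx.ne', mul_comm x s]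

-- Complementary slackness: the marginal rate `1 / (s + p)` is at most the price `x / ν`, with
-- equality unless `p = 0`, and then `q - p ≥ 0`.
theorem sub_div_add_max_le (hs : 0 < s) (hν : 0 < ν) (hx : 0 < x) (hq : 0 ≤ q) :
    (q - max (ν / x - s) 0) / (s + max (ν / x - s) 0) ≤ (q - max (ν / x - s) 0) * x / ν := by
  rcases le_total (ν / x) s with hdry | hwet
  · rw [max_eq_right (sub_nonpos.2 hdry), sub_zero, add_zero, mul_div_assoc, div_eq_mul_inv]
    gcongr
    rwa [← inv_div, inv_le_inv₀ hs (by positivity)]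
  · rw [max_eq_left (sub_nonneg.2 hwet), add_sub_cancel, div_div_eq_mul_div]

variable {ι : Type*} [Fintype ι] {c : ι → ℝ}

theorem sum_mul_max_div_sub (hc : ∀ k, 0 < c k) :
    ∑ k, c k * max (ν / c k - s) 0 = waterVolume (s • c) ν :=
  Finset.sum_congr rfl fun k _ => mul_max_div_sub (hc k)

theorem sum_log_le_sum_log_max_div_sub_add (hs : 0 < s) (hν : 0 < ν) (hc : ∀ k, 0 < c k)
    {q : ι → ℝ} (hq : ∀ k, 0 ≤ q k) :
    ∑ k, Real.log (1 + q k / s) ≤ ∑ k, Real.log (1 + max (ν / c k - s) 0 / s) +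
      (∑ k, c k * q k - waterVolume (s • c) ν) / ν := by
  rw [← sum_mul_max_div_sub hc, ← Finset.sum_sub_distrib, Finset.sum_div, ← Finset.sum_add_distrib]
  refine Finset.sum_le_sum fun k _ => ?_
  rw [← mul_sub, mul_comm (c k)]
  exact (log_one_add_div_le_add hs (le_max_right _ _) (hq k)).trans <|
    add_le_add_right (sub_div_add_max_le hs hν (hc k) (hq k)) _

end Optimality

theorem eventually_forall_pos {ι : Type*} [Finite ι] {c : ι → ℝ} (hc : ∀ k, 0 < c k) :
    ∀ᶠ c' in 𝓝 c, ∀ k, 0 < c' k :=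
  eventually_all.2 fun k => (continuous_apply k).continuousAt.eventually_const_lt (hc k)

section WaterFilling

variable {K : ℕ} {σ2 PT : ℝ} {c c' : Fin K → ℝ}

theorem wfPower_nonneg (k : Fin K) : 0 ≤ wfPower K σ2 PT c k := le_max_right _ _

variable (hK : 1 ≤ K) (hσ2 : 0 < σ2) (hPT : 0 < PT)
include hK hσ2 hPT

theorem waterLevel_spec (hc : ∀ k, 0 < c k) :
    0 < waterLevel K σ2 PT c ∧ waterVolume (σ2 • c) (waterLevel K σ2 PT c) = PT := by
  have : Nonempty (Fin K) := Fin.pos_iff_nonempty.1 hK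
  have hex : ∃ ν, 0 < ν ∧ waterVolume (σ2 • c) ν = PT := by
    obtain ⟨ν, hν⟩ := exists_waterVolume_eq (σ2 • c) hPT.le
    exact ⟨ν, pos_of_waterVolume_pos (fun k => (mul_pos hσ2 (hc k)).le) (hν ▸ hPT), hν⟩
  have hlevel : waterLevel K σ2 PT c = hex.choose := dif_pos hex
  exact hlevel ▸ hex.choose_spec

theorem waterLevel_pos (hc : ∀ k, 0 < c k) : 0 < waterLevel K σ2 PT c :=
  (waterLevel_spec hK hσ2 hPT hc).1

theorem waterVolume_waterLevel (hc : ∀ k, 0 < c k) :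
    waterVolume (σ2 • c) (waterLevel K σ2 PT c) = PT :=
  (waterLevel_spec hK hσ2 hPT hc).2

theorem sum_mul_wfPower (hc : ∀ k, 0 < c k) : ∑ k, c k * wfPower K σ2 PT c k = PT :=
  (sum_mul_max_div_sub hc).trans (waterVolume_waterLevel hK hσ2 hPT hc)

theorem lipschitzOnWith_waterLevel :
    LipschitzOnWith σ2.toNNReal (waterLevel K σ2 PT) {c | ∀ k, 0 < c k} := by
  refine .of_le_add_mul' σ2 fun c hc c' hc' => ?_
  refine le_add_of_waterVolume_eq hPT (waterVolume_waterLevel hK hσ2 hPT hc')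
    (waterVolume_waterLevel hK hσ2 hPT hc) fun k => ?_
  have hk : c k ≤ c' k + dist c c' := by
    linarith [le_of_abs_le ((Real.dist_eq (c k) (c' k)).symm.trans_le (dist_le_pi_dist c c' k))]
  calc σ2 * c k ≤ σ2 * (c' k + dist c c') := by gcongr
    _ = σ2 * c' k + σ2 * dist c c' := mul_add ..

theorem continuousAt_waterLevel (hc : ∀ k, 0 < c k) : ContinuousAt (waterLevel K σ2 PT) c :=
  (lipschitzOnWith_waterLevel hK hσ2 hPT).continuousOn.continuousAt
    (eventually_forall_pos hc)

theorem continuousAt_wfPower (hc : ∀ k, 0 < c k) (k : Fin K) :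
    ContinuousAt (fun c => wfPower K σ2 PT c k) c :=
  (((continuousAt_waterLevel hK hσ2 hPT hc).div (continuous_apply k).continuousAt
    (hc k).ne').sub continuousAt_const).max continuousAt_const

theorem sum_logb_le_sumRate_add (hc : ∀ k, 0 < c k) {q : Fin K → ℝ} (hq : ∀ k, 0 ≤ q k) :
    ∑ k, Real.logb 2 (1 + q k / σ2) ≤
      sumRate K σ2 PT c + (∑ k, c k * q k - PT) / (waterLevel K σ2 PT c * Real.log 2) := by
  have hlog := sum_log_le_sum_log_max_div_sub_add hσ2 (waterLevel_pos hK hσ2 hPT hc) hc hq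
  rw [waterVolume_waterLevel hK hσ2 hPT hc] at hlog
  simp only [sumRate, wfPower, Real.logb, ← Finset.sum_div]
  rw [← div_div, ← add_div]
  gcongr

theorem sumRate_le_sumRate_add (hc : ∀ k, 0 < c k) (hc' : ∀ k, 0 < c' k) :
    sumRate K σ2 PT c' ≤ sumRate K σ2 PT c + ∑ k,
      -wfPower K σ2 PT c' k / (waterLevel K σ2 PT c * Real.log 2) * (c' k - c k) := by
  have hexcess : ∑ k, c k * wfPower K σ2 PT c' k - PT =
      ∑ k, -wfPower K σ2 PT c' k * (c' k - c k) :=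
    calc
      _ = ∑ k, c k * wfPower K σ2 PT c' k - ∑ k, c' k * wfPower K σ2 PT c' k := by
        rw [sum_mul_wfPower hK hσ2 hPT hc']
      _ = _ := by
        rw [← Finset.sum_sub_distrib]
        exact Finset.sum_congr rfl fun k _ => by ring
  have hle : sumRate K σ2 PT c' ≤ _ :=
    sum_logb_le_sumRate_add hK hσ2 hPT hc (q := wfPower K σ2 PT c') wfPower_nonneg
  simpa only [hexcess, Finset.sum_div, mul_div_right_comm] using hle

end WaterFilling

theorem stmt5_general {K : ℕ} (hK : 1 ≤ K) {σ2 PT : ℝ} (hσ2 : 0 < σ2) (hPT : 0 < PT)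
    {c : Fin K → ℝ} (hc : ∀ k, 0 < c k) :
    HasFDerivAt (sumRate K σ2 PT)
      (∑ k, (-wfPower K σ2 PT c k / (waterLevel K σ2 PT c * Real.log 2)) •
        (ContinuousLinearMap.proj k : (Fin K → ℝ) →L[ℝ] ℝ)) c := by
  have hlog : Real.log 2 ≠ 0 := (Real.log_pos one_lt_two).ne'
  have hν : waterLevel K σ2 PT c * Real.log 2 ≠ 0 :=
    mul_ne_zero (waterLevel_pos hK hσ2 hPT hc).ne' hlog
  refine hasFDerivAt_of_eventually_le_of_eventually_ge
    (lower := fun c' => ∑ k, (-wfPower K σ2 PT c k / (waterLevel K σ2 PT c' * Real.log 2)) •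
      ContinuousLinearMap.proj k)
    (upper := fun c' => ∑ k, (-wfPower K σ2 PT c' k / (waterLevel K σ2 PT c * Real.log 2)) •
      ContinuousLinearMap.proj k) ?_ ?_ ?_ ?_
  · exact tendsto_finsetSum _ fun k _ => (tendsto_const_nhds.div
      ((continuousAt_waterLevel hK hσ2 hPT hc).tendsto.mul_const _) hν).smul_const _
  · exact tendsto_finsetSum _ fun k _ =>
      ((continuousAt_wfPower hK hσ2 hPT hc k).tendsto.neg.div_const _).smul_const _
  · filter_upwards [eventually_forall_pos hc] with c' hc'
    have h := sumRate_le_sumRate_add hK hσ2 hPT hc' hc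
    simp only [← neg_sub (c' _) (c _), mul_neg, Finset.sum_neg_distrib,
      ← sub_eq_add_neg] at h
    simpa using le_sub_iff_add_le.1 h
  · filter_upwards [eventually_forall_pos hc] with c' hc'
    simpa using sumRate_le_sumRate_add hK hσ2 hPT hc hc'

/-- the two-sided directional derivative of the sum rate R along the
k-th standard basis vector exists and equals −p_k(c)/(ν(c)·ln 2). -/
theorem stmt5 (K : ℕ) (hK : 1 ≤ K) (σ2 PT : ℝ) (hσ2 : 0 < σ2) (hPT : 0 < PT)
    (c : Fin K → ℝ) (hc : ∀ k, 0 < c k) (k : Fin K) :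
    HasDerivAt (fun δ : ℝ => sumRate K σ2 PT (c + δ • (Pi.single k 1 : Fin K → ℝ)))
      (-(wfPower K σ2 PT c k) / (waterLevel K σ2 PT c * Real.log 2)) 0 := by
  simpa [HasLineDerivAt, Pi.single_apply] using
    (stmt5_general hK hσ2 hPT hc).hasLineDerivAt (Pi.single k 1)
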